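/- arXiv:2006.07850 — 2 statements merged into one kernel-verified Lean document; each statement's English description precedes it below -/
import Mathlib

section
/- Let X be a reflexive Banach space over 𝕜 (𝕜 = ℝ or ℂ), and let T be a power-bounded operator on X of the form T = α·I + S with α ∈ 𝕜 and S^k compact for some k ≥ 1. Then T is almost periodic: for every x ∈ X the orbit {Tⁿ x : n ≥ 0} is relatively compact in the norm topology; moreover the adjoint T* is almost periodic on X*. -/
/-- The Banach-space adjoint of `T`, acting on the dual space: `T* f = f ∘ T`. -/
noncomputable def banachAdjoint {𝕜 : Type*} [RCLike 𝕜] {X : Type*} [NormedAddCommGroup X]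
    [NormedSpace 𝕜 X] (T : X →L[𝕜] X) :
    StrongDual 𝕜 X →L[𝕜] StrongDual 𝕜 X :=
  (ContinuousLinearMap.compL 𝕜 X X 𝕜).flip T

/-! The vectors whose orbit under `T` is relatively compact form a closed `T`-invariant subspace
`M`, and `M` contains the range of the compact operator `(T - α)ᵏ`, which commutes with `T`. It
therefore suffices that `(T - α) y ∈ M` implies `y ∈ M`. In that case `Tⁿ y - αⁿ y ∈ M` for all
`n`. If `|α| < 1`, then `Tⁿ y` comes arbitrarily close to `M`, which by power-boundedness makes the
orbit of `y` totally bounded. If `|α| > 1`, then `y` is the limit of `y - α⁻ⁿ Tⁿ y ∈ M`. If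
`|α| = 1`, reflexivity gives a weak cluster point `w` of the Cesàro averages of `α⁻ⁿ Tⁿ y`: it
satisfies `T w = α w`, so `w ∈ M`, and `w - y ∈ M`. By Schauder's theorem `T*` satisfies the same
hypotheses. -/

open Bornology Filter Metric NormedSpace Set Topology
open scoped Pointwise

theorem totallyBounded_of_forall_exists_dist_lt {α : Type*} [PseudoMetricSpace α] {s : Set α}
    (h : ∀ ε > 0, ∃ t, TotallyBounded t ∧ ∀ x ∈ s, ∃ y ∈ t, dist x y < ε) :
    TotallyBounded s := by
  refine Metric.totallyBounded_iff.2 fun ε hε => ?_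
  obtain ⟨t, ht, hst⟩ := h (ε / 2) (half_pos hε)
  obtain ⟨F, hF, htF⟩ := Metric.totallyBounded_iff.1 ht (ε / 2) (half_pos hε)
  refine ⟨F, hF, fun x hx => ?_⟩
  obtain ⟨y, hy, hxy⟩ := hst x hx
  obtain ⟨z, hz, hyz⟩ := mem_iUnion₂.1 (htF hy)
  exact mem_iUnion₂.2 ⟨z, hz, (dist_triangle x y z).trans_lt (by linarith [mem_ball.1 hyz])⟩

theorem eq_of_mapClusterPt_of_tendsto {ι α : Type*} [TopologicalSpace α] [T2Space α] {l : Filter ι}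
    {u : ι → α} {x y : α} (hx : MapClusterPt x l u) (hy : Tendsto u l (𝓝 y)) : x = y :=
  have : (𝓝 x ⊓ 𝓝 y).NeBot := hx.clusterPt.mono hy
  eq_of_nhds_neBot this

theorem tendstoUniformlyOn_of_equicontinuous {ι α β : Type*} [TopologicalSpace α] [UniformSpace β]
    {F : ι → α → β} {f : α → β} {l : Filter ι} (hF : Equicontinuous F) (h : Tendsto F l (𝓝 f))
    {K : Set α} (hK : IsCompact K) : TendstoUniformlyOn F f l K := by
  have h_cover : ⋃₀ {s : Set α | IsCompact s} = univ :=
    sUnion_eq_univ_iff.2 fun x => ⟨{x}, isCompact_singleton, rfl⟩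
  have h_tendsto := (EquicontinuousOn.tendsto_uniformOnFun_iff_pi (fun _ hs => hs) h_cover
    (fun s _ => hF.equicontinuousOn s) l f).2 h
  exact UniformOnFun.tendsto_iff_tendstoUniformlyOn.1 h_tendsto K hK

section Schauder

variable {𝕜 X Y : Type*} [NontriviallyNormedField 𝕜]
  [SeminormedAddCommGroup X] [NormedSpace 𝕜 X] [SeminormedAddCommGroup Y] [NormedSpace 𝕜 Y]

theorem tendsto_comp_of_isCompactOperator {ι : Type*} {l : Filter ι} {S : X →L[𝕜] Y}
    (hS : IsCompactOperator S) {g : ι → StrongDual 𝕜 Y} {g₀ : StrongDual 𝕜 Y}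
    (hg : ∃ C, ∀ i, ‖g i‖ ≤ C) (h : ∀ y, Tendsto (fun i => g i y) l (𝓝 (g₀ y))) :
    Tendsto (fun i => (g i).comp S) l (𝓝 (g₀.comp S)) := by
  refine (UniformConvergenceCLM.tendsto_iff_tendstoUniformlyOn (RingHom.id 𝕜) 𝕜
    {s : Set X | IsVonNBounded 𝕜 s}).2 fun s hs => ?_
  obtain ⟨K, hK, hSK⟩ :=
    IsCompactOperator.image_subset_compact_of_isVonNBounded (f := (S : X →ₗ[𝕜] Y)) hS hs
  have h_equicont : Equicontinuous fun i y => g i y :=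
    ((NormedSpace.equicontinuous_TFAE g).out 5 1).1 hg
  have h_unif := tendstoUniformlyOn_of_equicontinuous h_equicont (tendsto_pi_nhds.2 h) hK
  exact (h_unif.comp S).mono (image_subset_iff.1 hSK)

/-- **Schauder's theorem**. -/
theorem isCompactOperator_compL_flip [ProperSpace 𝕜] {S : X →L[𝕜] Y} (hS : IsCompactOperator S) :
    IsCompactOperator ((ContinuousLinearMap.compL 𝕜 X Y 𝕜).flip S) := by
  let B : Set (WeakDual 𝕜 Y) := WeakDual.toStrongDual ⁻¹' closedBall 0 1
  have : CompactSpace B := isCompact_iff_compactSpace.1 (WeakDual.isCompact_closedBall 0 1)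
  have h_cont : Continuous fun g : B => (WeakDual.toStrongDual (g : WeakDual 𝕜 Y)).comp S :=
    continuous_iff_continuousAt.2 fun g => tendsto_comp_of_isCompactOperator hS
      ⟨1, fun g => mem_closedBall_zero_iff.1 g.2⟩
      fun y => ((WeakDual.eval_continuous y).comp continuous_subtype_val).tendsto g
  refine (isCompactOperator_iff_exists_mem_nhds_image_subset_compact _).2
    ⟨closedBall 0 1, closedBall_mem_nhds _ one_pos, _, isCompact_range h_cont, ?_⟩
  rintro _ ⟨g, hg, rfl⟩
  exact ⟨⟨StrongDual.toWeakDual g, hg⟩, rfl⟩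

end Schauder

/-- `T` is power-bounded: its powers are uniformly bounded in operator norm. -/
def IsPowerBounded {𝕜 X : Type*} [NontriviallyNormedField 𝕜] [NormedAddCommGroup X]
    [NormedSpace 𝕜 X] (T : X →L[𝕜] X) : Prop :=
  ∃ C : ℝ, ∀ n : ℕ, ‖T ^ n‖ ≤ C

/-- The subspace of vectors whose orbit `{Tⁿ x : n ≥ 0}` is relatively compact in norm, so that
`T` is almost periodic exactly when this subspace is everything. -/
def almostPeriodicVectors {𝕜 X : Type*} [NontriviallyNormedField 𝕜] [NormedAddCommGroup X]
    [NormedSpace 𝕜 X] (T : X →L[𝕜] X) : Submodule 𝕜 X where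
  carrier := {x | IsCompact (closure (range fun n : ℕ => (T ^ n) x))}
  zero_mem' := by simp
  add_mem' {x y} hx hy := by
    refine (hx.add hy).closure_of_subset (range_subset_iff.2 fun n => ?_)
    rw [map_add]
    exact add_mem_add (subset_closure (mem_range_self n)) (subset_closure (mem_range_self n))
  smul_mem' c x hx := by
    refine (hx.smul c).closure_of_subset (range_subset_iff.2 fun n => ?_)
    rw [map_smul]
    exact smul_mem_smul_set (subset_closure (mem_range_self n))

section Operator

variable {𝕜 X : Type*} [NontriviallyNormedField 𝕜] [NormedAddCommGroup X] [NormedSpace 𝕜 X]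
  {T : X →L[𝕜] X}

theorem IsPowerBounded.exists_pos_norm_pow_apply_le (hT : IsPowerBounded T) :
    ∃ C > 0, ∀ (n : ℕ) (x : X), ‖(T ^ n) x‖ ≤ C * ‖x‖ := by
  obtain ⟨C, hC⟩ := hT
  exact ⟨max C 1, lt_max_of_lt_right one_pos,
    fun n x => (T ^ n).le_of_opNorm_le ((hC n).trans (le_max_left C 1)) x⟩

theorem IsPowerBounded.smul (hT : IsPowerBounded T) {c : 𝕜} (hc : ‖c‖ ≤ 1) :
    IsPowerBounded (c • T) := by
  obtain ⟨C, hC⟩ := hT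
  refine ⟨C, fun n => ?_⟩
  calc ‖(c • T) ^ n‖ = ‖c‖ ^ n * ‖T ^ n‖ := by rw [smul_pow, norm_smul, norm_pow]
    _ ≤ 1 * ‖T ^ n‖ := by gcongr; exact pow_le_one₀ (norm_nonneg c) hc
    _ ≤ C := (one_mul _).trans_le (hC n)

theorem pow_apply_sub_pow_smul_mem {M : Submodule 𝕜 X} (hM : ∀ z ∈ M, T z ∈ M) {α : 𝕜} {y : X}
    (hy : T y - α • y ∈ M) (n : ℕ) : (T ^ n) y - α ^ n • y ∈ M := by
  induction n with
  | zero => simp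
  | succ n ih =>
    have h_split : (T ^ (n + 1)) y - α ^ (n + 1) • y =
        T ((T ^ n) y - α ^ n • y) + α ^ n • (T y - α • y) := by
      rw [pow_succ' T, mul_apply_eq_comp, map_sub, map_smul, smul_sub, smul_smul,
        ← pow_succ, sub_add_sub_cancel]
    exact h_split ▸ M.add_mem (hM _ ih) (M.smul_mem _ hy)

theorem inv_smul_apply_sub_mem {M : Submodule 𝕜 X} {α : 𝕜} (hα : α ≠ 0) {y : X}
    (hy : T y - α • y ∈ M) : (α⁻¹ • T) y - y ∈ M := by
  have h := M.smul_mem α⁻¹ hy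
  rwa [smul_sub, inv_smul_smul₀ hα] at h

theorem mem_almostPeriodicVectors_of_forall_mem {x : X} {K : Set X} (hK : IsCompact K)
    (hx : ∀ n : ℕ, (T ^ n) x ∈ K) : x ∈ almostPeriodicVectors T :=
  hK.closure_of_subset (range_subset_iff.2 hx)

theorem apply_mem_almostPeriodicVectors {x : X} (hx : x ∈ almostPeriodicVectors T) :
    T x ∈ almostPeriodicVectors T :=
  mem_almostPeriodicVectors_of_forall_mem hx fun n => subset_closure ⟨n + 1, rfl⟩

theorem mem_almostPeriodicVectors_of_apply_eq_smul [ProperSpace 𝕜] {α : 𝕜} (hα : ‖α‖ ≤ 1) {x : X}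
    (hx : T x = α • x) : x ∈ almostPeriodicVectors T := by
  have h_compact : IsCompact ((fun c : 𝕜 => c • x) '' closedBall 0 1) :=
    (isCompact_closedBall 0 1).image (continuous_id.smul continuous_const)
  refine mem_almostPeriodicVectors_of_forall_mem h_compact fun n => ⟨α ^ n, ?_, ?_⟩
  · simpa using pow_le_one₀ (norm_nonneg α) hα
  · have h_pow : (T ^ n) x - α ^ n • x ∈ (⊥ : Submodule 𝕜 X) :=
      pow_apply_sub_pow_smul_mem (by simp) (by simp [hx]) n
    exact (sub_eq_zero.1 ((Submodule.mem_bot 𝕜).1 h_pow)).symm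

theorem apply_mem_almostPeriodicVectors_of_isCompactOperator {S : X →L[𝕜] X} (hT : IsPowerBounded T)
    (hS : IsCompactOperator S) (hTS : Commute T S) (x : X) : S x ∈ almostPeriodicVectors T := by
  obtain ⟨C, -, hC⟩ := hT.exists_pos_norm_pow_apply_le
  obtain ⟨K, hK, hSK⟩ := IsCompactOperator.image_closedBall_subset_compact
    (f := (S : X →ₗ[𝕜] X)) hS (C * ‖x‖)
  refine mem_almostPeriodicVectors_of_forall_mem hK fun n => ?_
  have h_comm : (T ^ n) (S x) = S ((T ^ n) x) := DFunLike.congr_fun (hTS.pow_left n).eq x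
  exact h_comm ▸ hSK (mem_image_of_mem _ (mem_closedBall_zero_iff.2 (hC n x)))

theorem mem_almostPeriodicVectors_of_forall_exists_dist_pow_lt [CompleteSpace X]
    (hT : IsPowerBounded T) {x : X}
    (hx : ∀ ε > 0, ∃ n : ℕ, ∃ z ∈ almostPeriodicVectors T, dist ((T ^ n) x) z < ε) :
    x ∈ almostPeriodicVectors T := by
  obtain ⟨C, hC_pos, hC⟩ := hT.exists_pos_norm_pow_apply_le
  suffices h : TotallyBounded (range fun n : ℕ => (T ^ n) x) from
    h.closure.isCompact_of_isClosed isClosed_closure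
  refine totallyBounded_of_forall_exists_dist_lt fun ε hε => ?_
  obtain ⟨n, z, hz, hxz⟩ := hx (ε / C) (div_pos hε hC_pos)
  refine ⟨(fun m => (T ^ m) x) '' Iio n ∪ range fun m : ℕ => (T ^ m) z,
    ((finite_Iio n).image _).totallyBounded.union (hz.totallyBounded.subset subset_closure), ?_⟩
  rintro _ ⟨m, rfl⟩
  rcases lt_or_ge m n with hmn | hnm
  · exact ⟨(T ^ m) x, Or.inl ⟨m, hmn, rfl⟩, by simpa using hε⟩
  · obtain ⟨j, rfl⟩ := Nat.exists_eq_add_of_le' hnm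
    refine ⟨(T ^ j) z, Or.inr ⟨j, rfl⟩, ?_⟩
    calc dist ((T ^ (j + n)) x) ((T ^ j) z) = ‖(T ^ j) ((T ^ n) x - z)‖ := by
          rw [dist_eq_norm, pow_add, mul_apply_eq_comp, map_sub]
      _ ≤ C * dist ((T ^ n) x) z := (hC j _).trans_eq (by rw [dist_eq_norm])
      _ < ε := (lt_div_iff₀' hC_pos).1 hxz

theorem isClosed_almostPeriodicVectors [CompleteSpace X] (hT : IsPowerBounded T) :
    IsClosed (almostPeriodicVectors T : Set X) :=
  isClosed_of_closure_subset fun _ hx =>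
    mem_almostPeriodicVectors_of_forall_exists_dist_pow_lt hT fun ε hε =>
      ⟨0, Metric.mem_closure_iff.1 hx ε hε⟩

theorem mem_almostPeriodicVectors_of_norm_lt_one [CompleteSpace X] (hT : IsPowerBounded T) {α : 𝕜}
    (hα : ‖α‖ < 1) {y : X} (hy : T y - α • y ∈ almostPeriodicVectors T) :
    y ∈ almostPeriodicVectors T := by
  have h_lim : Tendsto (fun n : ℕ => α ^ n • y) atTop (𝓝 0) := by
    simpa using (tendsto_pow_atTop_nhds_zero_of_norm_lt_one hα).smul_const y
  refine mem_almostPeriodicVectors_of_forall_exists_dist_pow_lt hT fun ε hε => ?_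
  obtain ⟨n, hn⟩ := (h_lim.eventually (ball_mem_nhds 0 hε)).exists
  refine ⟨n, _, pow_apply_sub_pow_smul_mem (fun _ => apply_mem_almostPeriodicVectors) hy n, ?_⟩
  simpa using hn

theorem mem_of_apply_sub_smul_mem_of_one_lt_norm (hT : IsPowerBounded T) {M : Submodule 𝕜 X}
    (hM_closed : IsClosed (M : Set X)) (hM : ∀ z ∈ M, T z ∈ M) {α : 𝕜} (hα : 1 < ‖α‖) {y : X}
    (hy : T y - α • y ∈ M) : y ∈ M := by
  have hα₀ : α ≠ 0 := norm_pos_iff.1 (one_pos.trans hα)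
  obtain ⟨C, -, hC⟩ := hT.exists_pos_norm_pow_apply_le
  have h_lim : Tendsto (fun n : ℕ => (α ^ n)⁻¹ • (T ^ n) y) atTop (𝓝 0) := by
    refine squeeze_zero_norm (a := fun n => (‖α‖⁻¹) ^ n * (C * ‖y‖)) (fun n => ?_) ?_
    · rw [norm_smul, norm_inv, norm_pow, inv_pow]
      gcongr
      exact hC n y
    · simpa using (tendsto_pow_atTop_nhds_zero_of_lt_one (inv_nonneg.2 (norm_nonneg α))
        (inv_lt_one_of_one_lt₀ hα)).mul_const (C * ‖y‖)
  have h_mem (n : ℕ) : y - (α ^ n)⁻¹ • (T ^ n) y ∈ M := by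
    have h := M.smul_mem (α ^ n)⁻¹ (pow_apply_sub_pow_smul_mem hM hy n)
    rw [smul_sub, inv_smul_smul₀ (pow_ne_zero n hα₀)] at h
    exact sub_mem_comm_iff.1 h
  exact hM_closed.mem_of_tendsto (by simpa using h_lim.const_sub y) (.of_forall h_mem)

end Operator

section BirkhoffAverage

theorem birkhoffAverage_eq_of_forall_apply_iterate_eq {R α M : Type*} [DivisionSemiring R]
    [AddCommMonoid M] [Module R M] {f : α → α} {g : α → M} {x : α}
    (h : ∀ m, g (f^[m] x) = g x) {n : ℕ} (hn : (n : R) ≠ 0) : birkhoffAverage R f g n x = g x := by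
  rw [birkhoffAverage, birkhoffSum, Finset.sum_congr rfl fun m _ => h m, Finset.sum_const,
    Finset.card_range, ← Nat.cast_smul_eq_nsmul R, inv_smul_smul₀ hn]

theorem norm_birkhoffAverage_le {𝕜 α E : Type*} [RCLike 𝕜] [NormedAddCommGroup E] [NormedSpace 𝕜 E]
    {f : α → α} {g : α → E} {x : α} {C : ℝ} (hC : ∀ m, ‖g (f^[m] x)‖ ≤ C) (n : ℕ) :
    ‖birkhoffAverage 𝕜 f g n x‖ ≤ C := by
  have h_sum : ‖birkhoffSum f g n x‖ ≤ n * C := by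
    simpa [birkhoffSum] using norm_sum_le_of_le (Finset.range n) fun m _ => hC m
  calc ‖birkhoffAverage 𝕜 f g n x‖ = ‖birkhoffSum f g n x‖ / n := by
        rw [birkhoffAverage, norm_smul, norm_inv, RCLike.norm_natCast, inv_mul_eq_div]
    _ ≤ C := div_le_of_le_mul₀ n.cast_nonneg ((norm_nonneg _).trans (hC 0)) (by linarith)

variable {𝕜 X : Type*} [RCLike 𝕜] [NormedAddCommGroup X] [NormedSpace 𝕜 X] {U : X →L[𝕜] X}

theorem IsPowerBounded.isBounded_range_iterate (hU : IsPowerBounded U) (y : X) :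
    IsBounded (range fun n => U^[n] y) := by
  obtain ⟨C, -, hC⟩ := hU.exists_pos_norm_pow_apply_le
  refine isBounded_iff_forall_norm_le.2 ⟨C * ‖y‖, forall_mem_range.2 fun n => ?_⟩
  rw [← FunLike.coe_pow_eq_iterate]
  exact hC n y

theorem IsPowerBounded.isBounded_range_birkhoffAverage (hU : IsPowerBounded U) (y : X) :
    IsBounded (range fun n => birkhoffAverage 𝕜 U id n y) := by
  obtain ⟨C, hC⟩ := isBounded_iff_forall_norm_le.1 (hU.isBounded_range_iterate y)
  exact isBounded_iff_forall_norm_le.2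
    ⟨C, forall_mem_range.2 (norm_birkhoffAverage_le (g := id) fun m => hC _ (mem_range_self m))⟩

theorem IsPowerBounded.tendsto_sub_one_birkhoffAverage (hU : IsPowerBounded U) (y : X) :
    Tendsto (fun n => (U - 1) (birkhoffAverage 𝕜 U id n y)) atTop (𝓝 0) := by
  refine (tendsto_birkhoffAverage_apply_sub_birkhoffAverage 𝕜 (g := id)
    (hU.isBounded_range_iterate y)).congr fun n => ?_
  have h_comm : U (birkhoffAverage 𝕜 U id n y) = birkhoffAverage 𝕜 U id n (U y) := by
    rw [map_birkhoffAverage 𝕜 𝕜 U]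
    simp [birkhoffAverage, birkhoffSum, ← Function.iterate_succ_apply, Function.iterate_succ_apply']
  simp [h_comm]

end BirkhoffAverage

section Reflexive

variable {𝕜 X Y : Type*} [RCLike 𝕜] [NormedAddCommGroup X] [NormedSpace 𝕜 X]
  [NormedAddCommGroup Y] [NormedSpace 𝕜 Y]

theorem exists_mapClusterPt_toWeakSpace (hX : Function.Surjective (inclusionInDoubleDual 𝕜 X))
    {ι : Type*} {l : Filter ι} [l.NeBot] {a : ι → X} (ha : IsBounded (range a)) :
    ∃ w, MapClusterPt (toWeakSpace 𝕜 X w) l fun i => toWeakSpace 𝕜 X (a i) := by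
  have h_compact : IsCompact (closure (range fun i => toWeakSpace 𝕜 X (a i))) :=
    isCompact_closure_of_isBounded 𝕜 X _ ha fun F _ => hX (WeakDual.toStrongDual F)
  obtain ⟨w, -, hw⟩ := h_compact.exists_mapClusterPt (f := l)
    (tendsto_principal.2 (.of_forall fun i => subset_closure (mem_range_self i)))
  exact ⟨(toWeakSpace 𝕜 X).symm w, hw⟩

theorem apply_eq_of_mapClusterPt_toWeakSpace {ι : Type*} {l : Filter ι} {a : ι → X} {w : X}
    (hw : MapClusterPt (toWeakSpace 𝕜 X w) l fun i => toWeakSpace 𝕜 X (a i)) (L : X →L[𝕜] Y)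
    {v : Y} (hL : Tendsto (fun i => L (a i)) l (𝓝 v)) : L w = v := by
  have h_cluster : MapClusterPt (toWeakSpace 𝕜 Y (L w)) l fun i => toWeakSpace 𝕜 Y (L (a i)) :=
    hw.tendsto_comp (f := WeakSpace.map L) ((WeakSpace.map L).continuous.tendsto _)
  have h_tendsto : Tendsto (fun i => toWeakSpace 𝕜 Y (L (a i))) l (𝓝 (toWeakSpace 𝕜 Y v)) :=
    ((toWeakSpaceCLM 𝕜 Y).continuous.tendsto v).comp hL
  exact (toWeakSpace 𝕜 Y).injective (eq_of_mapClusterPt_of_tendsto h_cluster h_tendsto)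

theorem exists_apply_eq_self_and_sub_mem (hX : Function.Surjective (inclusionInDoubleDual 𝕜 X))
    {U : X →L[𝕜] X} (hU : IsPowerBounded U) {M : Submodule 𝕜 X} (hM_closed : IsClosed (M : Set X))
    (hM : ∀ z ∈ M, U z ∈ M) {y : X} (hy : U y - y ∈ M) : ∃ w, U w = w ∧ w - y ∈ M := by
  obtain ⟨w, hw⟩ := exists_mapClusterPt_toWeakSpace hX (l := atTop)
    (hU.isBounded_range_birkhoffAverage y)
  have h_fixed : (U - 1) w = 0 :=
    apply_eq_of_mapClusterPt_toWeakSpace hw _ (hU.tendsto_sub_one_birkhoffAverage y)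
  have h_orbit (m : ℕ) : M.mkQL (U^[m] y) = M.mkQL y := by
    rw [← FunLike.coe_pow_eq_iterate]
    refine (Submodule.Quotient.eq M).2 ?_
    simpa using pow_apply_sub_pow_smul_mem hM (α := 1) (by simpa using hy) m
  have h_quotient : M.mkQL w = M.mkQL y := by
    refine apply_eq_of_mapClusterPt_toWeakSpace hw _ (tendsto_const_nhds.congr' ?_)
    filter_upwards [eventually_ne_atTop 0] with n hn
    rw [map_birkhoffAverage 𝕜 𝕜 M.mkQL, Function.comp_id,
      birkhoffAverage_eq_of_forall_apply_iterate_eq h_orbit (Nat.cast_ne_zero.2 hn)]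
  exact ⟨w, sub_eq_zero.1 h_fixed, (Submodule.Quotient.eq M).1 h_quotient⟩

theorem mem_almostPeriodicVectors_of_norm_eq_one [CompleteSpace X]
    (hX : Function.Surjective (inclusionInDoubleDual 𝕜 X)) {T : X →L[𝕜] X} (hT : IsPowerBounded T)
    {α : 𝕜} (hα : ‖α‖ = 1) {y : X} (hy : T y - α • y ∈ almostPeriodicVectors T) :
    y ∈ almostPeriodicVectors T := by
  have hα₀ : α ≠ 0 := norm_pos_iff.1 (hα ▸ one_pos)
  have hU : IsPowerBounded (α⁻¹ • T) := hT.smul (by rw [norm_inv, hα, inv_one])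
  obtain ⟨w, hw_fixed, hw⟩ := exists_apply_eq_self_and_sub_mem hX hU
    (isClosed_almostPeriodicVectors hT)
    (fun z hz => Submodule.smul_mem _ _ (apply_mem_almostPeriodicVectors hz))
    (inv_smul_apply_sub_mem hα₀ hy)
  have hw_eigen : T w = α • w := (inv_smul_eq_iff₀ hα₀).1 hw_fixed
  have hw_mem := mem_almostPeriodicVectors_of_apply_eq_smul hα.le hw_eigen
  exact (Submodule.sub_mem_iff_right _ hw_mem).1 hw

theorem mem_almostPeriodicVectors_of_apply_sub_smul_mem [CompleteSpace X] {T : X →L[𝕜] X}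
    (hT : IsPowerBounded T) {α : 𝕜}
    (hX : ‖α‖ = 1 → Function.Surjective (inclusionInDoubleDual 𝕜 X)) {y : X}
    (hy : T y - α • y ∈ almostPeriodicVectors T) : y ∈ almostPeriodicVectors T := by
  rcases lt_trichotomy ‖α‖ 1 with hα | hα | hα
  · exact mem_almostPeriodicVectors_of_norm_lt_one hT hα hy
  · exact mem_almostPeriodicVectors_of_norm_eq_one (hX hα) hT hα hy
  · exact mem_of_apply_sub_smul_mem_of_one_lt_norm hT (isClosed_almostPeriodicVectors hT)
      (fun _ => apply_mem_almostPeriodicVectors) hα hy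

theorem mem_almostPeriodicVectors_of_pow_sub_smul_mem [CompleteSpace X] {T : X →L[𝕜] X}
    (hT : IsPowerBounded T) {α : 𝕜}
    (hX : ‖α‖ = 1 → Function.Surjective (inclusionInDoubleDual 𝕜 X)) {k : ℕ} {x : X}
    (hx : ((T - α • 1) ^ k) x ∈ almostPeriodicVectors T) : x ∈ almostPeriodicVectors T := by
  induction k with
  | zero => exact hx
  | succ k ih =>
    rw [pow_succ', mul_apply_eq_comp] at hx
    exact ih (mem_almostPeriodicVectors_of_apply_sub_smul_mem hT hX hx)

theorem mem_almostPeriodicVectors_of_isCompactOperator_pow_sub_smul [CompleteSpace X]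
    {T : X →L[𝕜] X} (hT : IsPowerBounded T) {α : 𝕜}
    (hX : ‖α‖ = 1 → Function.Surjective (inclusionInDoubleDual 𝕜 X)) {k : ℕ}
    (hTk : IsCompactOperator ((T - α • 1) ^ k : X →L[𝕜] X)) (x : X) :
    x ∈ almostPeriodicVectors T := by
  have h_comm : Commute T ((T - α • 1) ^ k) :=
    ((Commute.refl T).sub_right ((Commute.one_right T).smul_right α)).pow_right k
  exact mem_almostPeriodicVectors_of_pow_sub_smul_mem hT hX
    (apply_mem_almostPeriodicVectors_of_isCompactOperator hT hTk h_comm x)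

end Reflexive

section Adjoint

variable {𝕜 X : Type*} [RCLike 𝕜] [NormedAddCommGroup X] [NormedSpace 𝕜 X]

theorem surjective_inclusionInDoubleDual_strongDual
    (hX : Function.Surjective (inclusionInDoubleDual 𝕜 X)) :
    Function.Surjective (inclusionInDoubleDual 𝕜 (StrongDual 𝕜 X)) := by
  intro G
  refine ⟨G.comp (inclusionInDoubleDual 𝕜 X), ?_⟩
  ext F
  obtain ⟨x, rfl⟩ := hX F
  rfl

theorem banachAdjoint_pow (T : X →L[𝕜] X) (n : ℕ) :
    banachAdjoint T ^ n = banachAdjoint (T ^ n) := by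
  induction n with
  | zero => rfl
  | succ n ih => rw [pow_succ, ih, pow_succ']; rfl

theorem banachAdjoint_sub_smul_one (T : X →L[𝕜] X) (α : 𝕜) :
    banachAdjoint (T - α • 1) = banachAdjoint T - α • 1 := by
  rw [banachAdjoint, map_sub, map_smul]
  rfl

theorem norm_banachAdjoint_le (T : X →L[𝕜] X) : ‖banachAdjoint T‖ ≤ ‖T‖ :=
  ContinuousLinearMap.opNorm_le_bound _ (norm_nonneg T) fun f =>
    (f.opNorm_comp_le T).trans_eq (mul_comm _ _)

theorem IsPowerBounded.banachAdjoint {T : X →L[𝕜] X} (hT : IsPowerBounded T) :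
    IsPowerBounded (banachAdjoint T) := by
  obtain ⟨C, hC⟩ := hT
  exact ⟨C, fun n => banachAdjoint_pow T n ▸ (norm_banachAdjoint_le _).trans (hC n)⟩

theorem isCompactOperator_banachAdjoint_sub_smul_pow {T : X →L[𝕜] X} {α : 𝕜} {k : ℕ}
    (hTk : IsCompactOperator ((T - α • 1) ^ k : X →L[𝕜] X)) :
    IsCompactOperator
      ((banachAdjoint T - α • 1) ^ k : StrongDual 𝕜 X →L[𝕜] StrongDual 𝕜 X) := by
  rw [← banachAdjoint_sub_smul_one, banachAdjoint_pow]
  exact isCompactOperator_compL_flip hTk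

end Adjoint

theorem almostPeriodic_scalar_plus_compact_power_reflexive_general {𝕜 : Type*} [RCLike 𝕜]
    {X : Type*} [NormedAddCommGroup X] [NormedSpace 𝕜 X] [CompleteSpace X] (α : 𝕜)
    (hrefl : ‖α‖ = 1 → Function.Surjective (inclusionInDoubleDual 𝕜 X))
    (S : X →L[𝕜] X) (k : ℕ) (hS : IsCompactOperator (S ^ k : X →L[𝕜] X))
    (T : X →L[𝕜] X) (hT : T = α • (1 : X →L[𝕜] X) + S)
    (hpb : ∃ C : ℝ, ∀ n : ℕ, ‖T ^ n‖ ≤ C) :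
    (∀ x : X, IsCompact (closure (range (fun n : ℕ => (T ^ n) x)))) ∧
    (∀ f : StrongDual 𝕜 X,
      IsCompact (closure (range (fun n : ℕ => (banachAdjoint T ^ n) f)))) := by
  have hT_pb : IsPowerBounded T := hpb
  obtain rfl : S = T - α • 1 := eq_sub_of_add_eq' hT.symm
  exact ⟨mem_almostPeriodicVectors_of_isCompactOperator_pow_sub_smul hT_pb hrefl hS,
    mem_almostPeriodicVectors_of_isCompactOperator_pow_sub_smul hT_pb.banachAdjoint
      (fun hα => surjective_inclusionInDoubleDual_strongDual (hrefl hα))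
      (isCompactOperator_banachAdjoint_sub_smul_pow hS)⟩

/-- Let `X` be a reflexive Banach space over `𝕜` (`ℝ` or `ℂ`) and let
`T = α·I + S` be power-bounded with `S^k` compact for some `k ≥ 1`. Then `T` and its
adjoint `T*` are almost periodic (all orbits relatively norm-compact). -/
theorem almostPeriodic_scalar_plus_compact_power_reflexive {𝕜 : Type*} [RCLike 𝕜]
    {X : Type*} [NormedAddCommGroup X] [NormedSpace 𝕜 X] [CompleteSpace X]
    (hrefl : Function.Bijective (NormedSpace.inclusionInDoubleDual 𝕜 X))
    (α : 𝕜) (S : X →L[𝕜] X) (k : ℕ) (hk : 1 ≤ k)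
    (hS : IsCompactOperator (S ^ k : X →L[𝕜] X))
    (T : X →L[𝕜] X) (hT : T = α • (1 : X →L[𝕜] X) + S)
    (hpb : ∃ C : ℝ, ∀ n : ℕ, ‖T ^ n‖ ≤ C) :
    (∀ x : X, IsCompact (closure (Set.range (fun n : ℕ => (T ^ n) x)))) ∧
    (∀ f : StrongDual 𝕜 X,
      IsCompact (closure (Set.range (fun n : ℕ => (banachAdjoint T ^ n) f)))) :=
  almostPeriodic_scalar_plus_compact_power_reflexive_general α (fun _ => hrefl.2) S k hS T hT hpb
end

section
/- Let X be a Banach space over 𝕜 (𝕜 = ℝ or ℂ), and let T be a weakly almost periodic operator on X of the form T = α·I + S with α ∈ 𝕜 and S^k compact for some k ≥ 1. Suppose that inf_{n ≥ 0} ‖Tⁿ x‖ > 0 for every x ≠ 0. Then T is invertible (bijective with bounded inverse), the inverse T⁻¹ is power-bounded (sup_{n ≥ 0} ‖T⁻ⁿ‖ < ∞), and T⁻¹ is almost periodic. -/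
/-!
The weak-operator closure of `{Tⁿ : n ≥ 0}` is a compact right-topological semigroup. If `P` is one
of its idempotents, every vector `P x - x` is a flight vector: its weak orbit closure contains
`P (P x - x) = 0`. For a flight vector `x` the orbit of `S ^ k x` is relatively compact in norm, so
it approaches `0` in norm and the lower bound forces `S ^ k x = 0`. Descending through
`S ^ (k - 1) x, …, x`, which turn into eigenvectors of `T` one after another, gives `x = 0`. Hence
`1` is the only idempotent, the semigroup is a group, and it contains `T⁻¹` and all its powers.

Being orbits of a group, the weak orbit closures are minimal. They are also weakly compact and norm
separable, so Baire's theorem finds a nonempty relatively weakly open piece of small diameter, and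
minimality spreads it into a finite cover by sets of small diameter.
-/

open Set Topology

section EnvelopingSemigroup

variable {W : Type*} [TopologicalSpace W] {F f g : W → W}

/-- The enveloping (Ellis) semigroup of a self-map `F`: the closure of the set of its iterates in
the topology of pointwise convergence. -/
def envelopingSemigroup (F : W → W) : Set (W → W) :=
  closure (range fun n : ℕ => F^[n])

lemma iterate_mem_envelopingSemigroup (F : W → W) (n : ℕ) : F^[n] ∈ envelopingSemigroup F :=
  subset_closure ⟨n, rfl⟩

lemma comp_mem_envelopingSemigroup (hF : Continuous F) (hf : f ∈ envelopingSemigroup F)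
    (hg : g ∈ envelopingSemigroup F) : f ∘ g ∈ envelopingSemigroup F := by
  have iterate_comp_mem (n : ℕ) : F^[n] ∘ g ∈ envelopingSemigroup F := by
    refine map_mem_closure (Pi.continuous_postcomp (hF.iterate n)) hg ?_
    rintro _ ⟨m, rfl⟩
    exact ⟨n + m, Function.iterate_add F n m⟩
  refine isClosed_closure.closure_subset
    (map_mem_closure (f := (· ∘ g)) (Pi.continuous_precomp g) hf ?_)
  rintro _ ⟨n, rfl⟩
  exact iterate_comp_mem n

lemma apply_mem_closure_range_iterate (hf : f ∈ envelopingSemigroup F) (w : W) :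
    f w ∈ closure (range fun n : ℕ => F^[n] w) := by
  refine map_mem_closure (f := fun f : W → W => f w) (continuous_apply w) hf ?_
  rintro _ ⟨n, rfl⟩
  exact ⟨n, rfl⟩

lemma isCompact_envelopingSemigroup
    (hF : ∀ w, IsCompact (closure (range fun n : ℕ => F^[n] w))) :
    IsCompact (envelopingSemigroup F) :=
  (isCompact_univ_pi hF).of_isClosed_subset isClosed_closure
    fun _ hf w _ => apply_mem_closure_range_iterate hf w

variable [T2Space W]

lemma exists_mem_envelopingSemigroup_apply_eq
    (hF : ∀ w, IsCompact (closure (range fun n : ℕ => F^[n] w))) {v w : W}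
    (hv : v ∈ closure (range fun n : ℕ => F^[n] w)) : ∃ f ∈ envelopingSemigroup F, f w = v := by
  have hclosed : IsClosed ((fun f : W → W => f w) '' envelopingSemigroup F) :=
    ((isCompact_envelopingSemigroup hF).image (continuous_apply w)).isClosed
  refine closure_minimal ?_ hclosed hv
  rintro _ ⟨n, rfl⟩
  exact ⟨_, iterate_mem_envelopingSemigroup F n, rfl⟩

-- `{g ∘ f | g ∈ E}` is a compact right-topological semigroup, so it contains an idempotent.
lemma exists_leftInverse_mem_envelopingSemigroup (hcont : Continuous F)
    (hF : ∀ w, IsCompact (closure (range fun n : ℕ => F^[n] w)))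
    (hidem : ∀ p ∈ envelopingSemigroup F, p ∘ p = p → p = id) (hf : f ∈ envelopingSemigroup F) :
    ∃ g ∈ envelopingSemigroup F, g ∘ f = id := by
  let _ : Semigroup (W → W) := { mul := (· ∘ ·), mul_assoc := fun _ _ _ => rfl }
  have hmul : ∀ᵉ (p ∈ (· ∘ f) '' envelopingSemigroup F) (q ∈ (· ∘ f) '' envelopingSemigroup F),
      p ∘ q ∈ (· ∘ f) '' envelopingSemigroup F := by
    rintro _ ⟨a, ha, rfl⟩ _ ⟨b, hb, rfl⟩
    exact ⟨a ∘ f ∘ b,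
      comp_mem_envelopingSemigroup hcont ha (comp_mem_envelopingSemigroup hcont hf hb), rfl⟩
  obtain ⟨_, ⟨g, hg, rfl⟩, hgf⟩ := exists_idempotent_in_compact_subsemigroup (M := W → W)
    (fun f => Pi.continuous_precomp f) ((· ∘ f) '' envelopingSemigroup F) ⟨_, f, hf, rfl⟩
    ((isCompact_envelopingSemigroup hF).image (Pi.continuous_precomp f)) hmul
  exact ⟨g, hg, hidem _ (comp_mem_envelopingSemigroup hcont hg hf) hgf⟩

end EnvelopingSemigroup

section WeakClosure

variable {𝕜 : Type*} [NontriviallyNormedField 𝕜] {X : Type*} [SeminormedAddCommGroup X]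
  [NormedSpace 𝕜 X] {s t : Set X}

variable (𝕜) in
/-- The closure of `s` in the weak topology, as a subset of the original space. -/
def weakClosure (s : Set X) : Set X :=
  toWeakSpace 𝕜 X ⁻¹' closure (toWeakSpace 𝕜 X '' s)

lemma weakClosure_subset (hst : s ⊆ t) (ht : IsClosed (toWeakSpace 𝕜 X '' t)) :
    weakClosure 𝕜 s ⊆ t := fun x hx => by
  obtain ⟨y, hy, hyx⟩ := closure_minimal (image_mono hst) ht hx
  rwa [← (toWeakSpace 𝕜 X).injective hyx]

lemma toWeakSpace_image_weakClosure (s : Set X) :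
    toWeakSpace 𝕜 X '' weakClosure 𝕜 s = closure (toWeakSpace 𝕜 X '' s) :=
  image_preimage_eq _ (toWeakSpace 𝕜 X).surjective

end WeakClosure

section HahnBanach

variable {𝕜 : Type*} [RCLike 𝕜] {X : Type*} [NormedAddCommGroup X] [NormedSpace 𝕜 X] {s : Set X}

lemma weakClosure_subset_closure_of_isCompact (hs : IsCompact (closure s)) :
    weakClosure 𝕜 s ⊆ closure s :=
  weakClosure_subset subset_closure (hs.image (toWeakSpaceCLM 𝕜 X).continuous).isClosed

lemma isClosed_toWeakSpace_image_closedBall (z : X) (r : ℝ) :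
    IsClosed (toWeakSpace 𝕜 X '' Metric.closedBall z r) := by
  let _ : NormedSpace ℝ X := NormedSpace.restrictScalars ℝ 𝕜 X
  have : IsScalarTower ℝ 𝕜 X := .of_algebraMap_smul fun _ _ => rfl
  rw [← Metric.isClosed_closedBall.closure_eq, (convex_closedBall z r).toWeakSpace_closure 𝕜]
  exact isClosed_closure

lemma isClosed_toWeakSpace_image_submodule {p : Submodule 𝕜 X} (hp : IsClosed (p : Set X)) :
    IsClosed (toWeakSpace 𝕜 X '' p) := by
  let _ : NormedSpace ℝ X := NormedSpace.restrictScalars ℝ 𝕜 X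
  have : IsScalarTower ℝ 𝕜 X := .of_algebraMap_smul fun _ _ => rfl
  have hconvex : Convex ℝ (p : Set X) := (p.restrictScalars ℝ).convex
  rw [← hp.closure_eq, hconvex.toWeakSpace_closure 𝕜]
  exact isClosed_closure

lemma isSeparable_weakClosure (hs : TopologicalSpace.IsSeparable s) :
    TopologicalSpace.IsSeparable (weakClosure 𝕜 s) :=
  (hs.span (R := 𝕜)).closure.mono <| weakClosure_subset
    (Submodule.subset_span.trans subset_closure)
    (isClosed_toWeakSpace_image_submodule (p := (Submodule.span 𝕜 s).topologicalClosure)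
      isClosed_closure)

-- Apply the uniform boundedness principle to the elements of `s` as functionals on the dual space.
lemma isBounded_of_isCompact_closure_toWeakSpace_image
    (hs : IsCompact (closure (toWeakSpace 𝕜 X '' s))) : Bornology.IsBounded s := by
  have hpointwise (φ : StrongDual 𝕜 X) :
      ∃ C, ∀ x : s, ‖NormedSpace.inclusionInDoubleDual 𝕜 X x φ‖ ≤ C := by
    have hφ : Continuous fun w : WeakSpace 𝕜 X => φ ((toWeakSpace 𝕜 X).symm w) :=
      WeakBilin.eval_continuous (topDualPairing 𝕜 X).flip φ
    obtain ⟨C, hC⟩ := (hs.image hφ).isBounded.exists_norm_le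
    exact ⟨C, fun x => hC _ ⟨_, subset_closure (mem_image_of_mem _ x.2), rfl⟩⟩
  obtain ⟨C, hC⟩ := banach_steinhaus hpointwise
  refine isBounded_iff_forall_norm_le.2 ⟨C, fun x hx => ?_⟩
  rw [← (NormedSpace.inclusionInDoubleDualLi 𝕜).norm_map x]
  exact hC ⟨x, hx⟩

-- `s` is covered by countably many balls of radius `ε`, each of which is weakly closed, so
-- Baire's theorem in the weak topology of `s` makes one of them a weak neighbourhood.
lemma exists_isOpen_toWeakSpace_preimage_subset_closedBall (hne : s.Nonempty)
    (hs : IsCompact (toWeakSpace 𝕜 X '' s)) (hsep : TopologicalSpace.IsSeparable s) {ε : ℝ}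
    (hε : 0 < ε) :
    ∃ V : Set (WeakSpace 𝕜 X), IsOpen V ∧ (s ∩ toWeakSpace 𝕜 X ⁻¹' V).Nonempty ∧
      ∃ z, s ∩ toWeakSpace 𝕜 X ⁻¹' V ⊆ Metric.closedBall z ε := by
  let K := toWeakSpace 𝕜 X '' s
  have : CompactSpace K := isCompact_iff_compactSpace.1 hs
  have : Nonempty K := (hne.image _).to_subtype
  obtain ⟨c, hc, hsc⟩ := hsep
  have : Countable c := hc.to_subtype
  let B (z : c) : Set K := Subtype.val ⁻¹' (toWeakSpace 𝕜 X '' Metric.closedBall (z : X) ε)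
  have hclosed (z : c) : IsClosed (B z) :=
    (isClosed_toWeakSpace_image_closedBall _ _).preimage continuous_subtype_val
  have hcover : ⋃ z, B z = univ := by
    refine eq_univ_of_forall ?_
    rintro ⟨_, x, hx, rfl⟩
    obtain ⟨z, hz, hxz⟩ := Metric.mem_closure_iff.1 (hsc hx) ε hε
    exact mem_iUnion.2 ⟨⟨z, hz⟩, x, hxz.le, rfl⟩
  obtain ⟨z, ⟨_, x, hx, rfl⟩, hxz⟩ := nonempty_interior_of_iUnion_of_closed hclosed hcover
  obtain ⟨U, hUB, hU, hxU⟩ := mem_interior.1 hxz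
  obtain ⟨V, hV, rfl⟩ := isOpen_induced_iff.1 hU
  refine ⟨V, hV, ⟨x, hx, hxU⟩, z, fun y hy => ?_⟩
  have hyB : (⟨_, mem_image_of_mem _ hy.1⟩ : K) ∈ B z := hUB hy.2
  obtain ⟨y', hy', hyy'⟩ := hyB
  rwa [← (toWeakSpace 𝕜 X).injective hyy']

end HahnBanach

section Orbits

variable {𝕜 : Type*} [NontriviallyNormedField 𝕜] {X : Type*} [SeminormedAddCommGroup X]
  [NormedSpace 𝕜 X] {S T : X →L[𝕜] X} {x : X}

/-- The forward orbit `{Tⁿ x : n ≥ 0}` of the vector `x`. -/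
def forwardOrbit (T : X →L[𝕜] X) (x : X) : Set X :=
  range fun n : ℕ => (T ^ n) x

/-- Weak almost periodicity: every forward orbit is relatively compact in the weak topology. -/
def IsWeaklyAlmostPeriodic (T : X →L[𝕜] X) : Prop :=
  ∀ x, IsCompact (closure (toWeakSpace 𝕜 X '' forwardOrbit T x))

/-- Almost periodicity: every forward orbit is relatively compact in the norm topology. -/
def IsAlmostPeriodic (T : X →L[𝕜] X) : Prop :=
  ∀ x, IsCompact (closure (forwardOrbit T x))

/-- A flight vector, in the terminology of Jacobs: a vector whose weak orbit closure contains
`0`. These vectors form the stable part of the Jacobs–de Leeuw–Glicksberg decomposition. -/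
def IsFlightVector (T : X →L[𝕜] X) (x : X) : Prop :=
  0 ∈ weakClosure 𝕜 (forwardOrbit T x)

lemma image_forwardOrbit (hST : Commute S T) (x : X) :
    S '' forwardOrbit T x = forwardOrbit T (S x) := by
  rw [forwardOrbit, ← range_comp]
  exact congrArg range (funext fun n => DFunLike.congr_fun (hST.pow_right n).eq x)

lemma IsFlightVector.map (hST : Commute S T) (hx : IsFlightVector T x) :
    IsFlightVector T (S x) := by
  rw [IsFlightVector, ← image_forwardOrbit hST, ← map_zero S]
  refine map_mem_closure (f := WeakSpace.map S) (WeakSpace.map S).continuous hx ?_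
  rintro _ ⟨y, hy, rfl⟩
  exact ⟨S y, mem_image_of_mem S hy, rfl⟩

lemma forwardOrbit_subset_closedBall {C : ℝ} (hC : ∀ n : ℕ, ‖T ^ n‖ ≤ C) (x : X) :
    forwardOrbit T x ⊆ Metric.closedBall 0 (C * ‖x‖) := by
  rintro _ ⟨n, rfl⟩
  exact mem_closedBall_zero_iff.2 ((T ^ n).le_of_opNorm_le (hC n) x)

lemma eq_zero_of_zero_mem_closure_forwardOrbit (hinf : x ≠ 0 → 0 < ⨅ n : ℕ, ‖(T ^ n) x‖)
    (hx : 0 ∈ closure (forwardOrbit T x)) : x = 0 := by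
  by_contra hne
  obtain ⟨n, hn⟩ := Metric.mem_closure_range_iff.1 hx _ (hinf hne)
  rw [dist_zero_left] at hn
  exact hn.not_ge (ciInf_le ⟨0, forall_mem_range.2 fun _ => norm_nonneg _⟩ n)

lemma isCompact_closure_forwardOrbit_apply [T2Space X] {C : ℝ} (hC : ∀ n : ℕ, ‖T ^ n‖ ≤ C)
    (hS : IsCompactOperator S) (hST : Commute S T) (x : X) :
    IsCompact (closure (forwardOrbit T (S x))) := by
  rw [← image_forwardOrbit hST]
  exact (hS.isCompact_closure_image_closedBall (f := S.toLinearMap) (C * ‖x‖)).of_isClosed_subset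
    isClosed_closure (closure_mono (image_mono (forwardOrbit_subset_closedBall hC x)))

lemma coe_map_pow (T : X →L[𝕜] X) (n : ℕ) :
    ⇑(WeakSpace.map (T ^ n)) = (WeakSpace.map T)^[n] :=
  FunLike.coe_pow_eq_iterate T n

lemma range_iterate_map_toWeakSpace (T : X →L[𝕜] X) (x : X) :
    (range fun n : ℕ => (WeakSpace.map T)^[n] (toWeakSpace 𝕜 X x)) =
      toWeakSpace 𝕜 X '' forwardOrbit T x := by
  rw [forwardOrbit, ← range_comp]
  exact congrArg range (funext fun n => (congrFun (coe_map_pow T n) x).symm)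

end Orbits

section WeakPowerClosure

variable {𝕜 : Type*} [NontriviallyNormedField 𝕜] {X : Type*} [SeminormedAddCommGroup X]
  [NormedSpace 𝕜 X] {A B T : X →L[𝕜] X}

/-- The closure of `{Tⁿ : n ≥ 0}` in the weak operator topology, encoded by viewing operators as
elements of the enveloping semigroup of `T` acting on `X` with its weak topology. -/
def weakPowerClosure (T : X →L[𝕜] X) : Set (X →L[𝕜] X) :=
  {A | ⇑(WeakSpace.map A) ∈ envelopingSemigroup (WeakSpace.map T)}

lemma pow_mem_weakPowerClosure (T : X →L[𝕜] X) (n : ℕ) : T ^ n ∈ weakPowerClosure T := by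
  rw [weakPowerClosure, mem_ofPred_eq, coe_map_pow]
  exact iterate_mem_envelopingSemigroup (WeakSpace.map T) n

lemma mul_mem_weakPowerClosure (hA : A ∈ weakPowerClosure T) (hB : B ∈ weakPowerClosure T) :
    A * B ∈ weakPowerClosure T :=
  comp_mem_envelopingSemigroup (f := WeakSpace.map A) (g := WeakSpace.map B)
    (WeakSpace.map T).continuous hA hB

lemma pow_mem_weakPowerClosure_of_mem (hA : A ∈ weakPowerClosure T) (n : ℕ) :
    A ^ n ∈ weakPowerClosure T := by
  induction n with
  | zero => exact pow_mem_weakPowerClosure T 0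
  | succ n ih => exact mul_mem_weakPowerClosure ih hA

lemma toWeakSpace_apply_mem_closure {f : WeakSpace 𝕜 X → WeakSpace 𝕜 X}
    (hf : f ∈ envelopingSemigroup (WeakSpace.map T)) (x : X) :
    f (toWeakSpace 𝕜 X x) ∈ closure (toWeakSpace 𝕜 X '' forwardOrbit T x) :=
  range_iterate_map_toWeakSpace T x ▸ apply_mem_closure_range_iterate hf _

lemma apply_mem_weakClosure_forwardOrbit (hA : A ∈ weakPowerClosure T) (x : X) :
    A x ∈ weakClosure 𝕜 (forwardOrbit T x) :=
  toWeakSpace_apply_mem_closure hA x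

lemma eq_one_of_mul_self_of_mem_weakPowerClosure (hflight : ∀ x, IsFlightVector T x → x = 0)
    (hA : A ∈ weakPowerClosure T) (hAA : A * A = A) : A = 1 := by
  ext x
  have hzero : A (A x - x) = 0 := by
    rw [map_sub, ← mul_apply_eq_comp, hAA, sub_self]
  have hmem := apply_mem_weakClosure_forwardOrbit hA (A x - x)
  rw [hzero] at hmem
  exact sub_eq_zero.1 (hflight _ hmem)

lemma IsWeaklyAlmostPeriodic.isCompact_closure_range_iterate (hT : IsWeaklyAlmostPeriodic T)
    (w : WeakSpace 𝕜 X) : IsCompact (closure (range fun n : ℕ => (WeakSpace.map T)^[n] w)) := by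
  obtain ⟨x, rfl⟩ := (toWeakSpace 𝕜 X).surjective w
  rw [range_iterate_map_toWeakSpace]
  exact hT x

end WeakPowerClosure

section BoundedWeakPowerClosure

variable {𝕜 : Type*} [RCLike 𝕜] {X : Type*} [NormedAddCommGroup X] [NormedSpace 𝕜 X]
  {A T : X →L[𝕜] X} {C : ℝ}

lemma commute_of_mem_weakPowerClosure (hA : A ∈ weakPowerClosure T) : Commute A T := by
  ext x
  have hclosed : IsClosed {f : WeakSpace 𝕜 X → WeakSpace 𝕜 X |
      f (WeakSpace.map T (toWeakSpace 𝕜 X x)) = WeakSpace.map T (f (toWeakSpace 𝕜 X x))} :=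
    isClosed_eq (continuous_apply _) ((WeakSpace.map T).continuous.comp (continuous_apply _))
  refine closure_minimal ?_ hclosed hA
  rintro _ ⟨n, rfl⟩
  exact (Function.Commute.self_iterate (WeakSpace.map T) n _).symm

lemma weakClosure_forwardOrbit_subset_closedBall (hC : ∀ n : ℕ, ‖T ^ n‖ ≤ C) (x : X) :
    weakClosure 𝕜 (forwardOrbit T x) ⊆ Metric.closedBall 0 (C * ‖x‖) :=
  weakClosure_subset (forwardOrbit_subset_closedBall hC x)
    (isClosed_toWeakSpace_image_closedBall _ _)

lemma norm_le_of_mem_weakPowerClosure (hC : ∀ n : ℕ, ‖T ^ n‖ ≤ C)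
    (hA : A ∈ weakPowerClosure T) : ‖A‖ ≤ C :=
  A.opNorm_le_bound ((norm_nonneg _).trans (hC 0)) fun x => mem_closedBall_zero_iff.1 <|
    weakClosure_forwardOrbit_subset_closedBall hC x (apply_mem_weakClosure_forwardOrbit hA x)

lemma exists_mem_weakPowerClosure_coe_map_eq (hC : ∀ n : ℕ, ‖T ^ n‖ ≤ C)
    {f : WeakSpace 𝕜 X → WeakSpace 𝕜 X} (hf : f ∈ envelopingSemigroup (WeakSpace.map T)) :
    ∃ A ∈ weakPowerClosure T, ⇑(WeakSpace.map A) = f := by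
  have hlinear : f ∈ closure (range ((↑) : (WeakSpace 𝕜 X →ₗ[𝕜] WeakSpace 𝕜 X) → _)) := by
    refine closure_mono ?_ hf
    rintro _ ⟨n, rfl⟩
    exact ⟨WeakSpace.map (T ^ n), coe_map_pow T n⟩
  let A : X →L[𝕜] X := LinearMap.mkContinuous
    ((toWeakSpace 𝕜 X).symm.toLinearMap ∘ₗ linearMapOfMemClosureRangeCoe f hlinear ∘ₗ
      (toWeakSpace 𝕜 X).toLinearMap) C fun x => mem_closedBall_zero_iff.1 <|
        weakClosure_forwardOrbit_subset_closedBall hC x (toWeakSpace_apply_mem_closure hf x)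
  exact ⟨A, hf, rfl⟩

lemma IsWeaklyAlmostPeriodic.exists_norm_pow_le [CompleteSpace X]
    (hT : IsWeaklyAlmostPeriodic T) : ∃ C, ∀ n : ℕ, ‖T ^ n‖ ≤ C := by
  refine banach_steinhaus fun x => ?_
  obtain ⟨C, hC⟩ := (isBounded_of_isCompact_closure_toWeakSpace_image (hT x)).exists_norm_le
  exact ⟨C, fun n => hC _ ⟨n, rfl⟩⟩

end BoundedWeakPowerClosure

section Reversible

variable {𝕜 : Type*} [RCLike 𝕜] {X : Type*} [NormedAddCommGroup X] [NormedSpace 𝕜 X]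
  {A L T : X →L[𝕜] X} {C : ℝ}

-- Covering `K` by preimages `T⁻ⁿ V` of a weakly open piece `V ∩ K` of small diameter, where
-- minimality provides the cover, the bounded operators `Lⁿ` carry the smallness of `V ∩ K` back.
lemma totallyBounded_of_minimal (hLT : L * T = 1) (hC : ∀ n : ℕ, ‖L ^ n‖ ≤ C) {K : Set X}
    (hK : IsCompact (toWeakSpace 𝕜 X '' K)) (hsep : TopologicalSpace.IsSeparable K)
    (hmaps : MapsTo T K K) (hmin : ∀ y ∈ K, K ⊆ weakClosure 𝕜 (forwardOrbit T y)) :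
    TotallyBounded K := by
  obtain rfl | hne := K.eq_empty_or_nonempty
  · exact totallyBounded_empty
  refine Metric.totallyBounded_iff.2 fun ε hε => ?_
  have hC0 : 0 ≤ C := (norm_nonneg _).trans (hC 0)
  obtain ⟨V, hV, ⟨y₀, hy₀, hy₀V⟩, z, hz⟩ := exists_isOpen_toWeakSpace_preimage_subset_closedBall
    hne hK hsep (ε := ε / (C + 1)) (by positivity)
  obtain ⟨t, ht⟩ := hK.elim_finite_subcover (fun n : ℕ => WeakSpace.map (T ^ n) ⁻¹' V)
    (fun n => hV.preimage (WeakSpace.map (T ^ n)).continuous) (by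
      rintro _ ⟨y, hy, rfl⟩
      have hmem : toWeakSpace 𝕜 X y₀ ∈ closure (toWeakSpace 𝕜 X '' forwardOrbit T y) :=
        hmin y hy hy₀
      obtain ⟨_, hv, _, ⟨n, rfl⟩, rfl⟩ := mem_closure_iff.1 hmem V hV hy₀V
      exact mem_iUnion.2 ⟨n, hv⟩)
  refine ⟨(fun n : ℕ => (L ^ n) z) '' t, t.finite_toSet.image _, fun y hy => ?_⟩
  obtain ⟨n, hn, hyV⟩ := mem_iUnion₂.1 (ht (mem_image_of_mem _ hy))
  have hTy : (T ^ n) y ∈ K := by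
    rw [FunLike.coe_pow_eq_iterate]
    exact hmaps.iterate n hy
  have hcancel : (L ^ n) ((T ^ n) y) = y := DFunLike.congr_fun (pow_mul_pow_eq_one n hLT) y
  refine mem_iUnion₂.2 ⟨_, mem_image_of_mem _ hn, ?_⟩
  calc dist y ((L ^ n) z)
      = ‖(L ^ n) ((T ^ n) y - z)‖ := by rw [map_sub, hcancel, dist_eq_norm]
    _ ≤ C * (ε / (C + 1)) :=
        (L ^ n).le_of_opNorm_le_of_le (hC n) (mem_closedBall_iff_norm.1 (hz ⟨hTy, hyV⟩))
    _ < (C + 1) * (ε / (C + 1)) := by gcongr; linarith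
    _ = ε := by field_simp

variable [CompleteSpace X]

lemma exists_mem_weakPowerClosure_apply_eq (hT : IsWeaklyAlmostPeriodic T) {x y : X}
    (hy : y ∈ weakClosure 𝕜 (forwardOrbit T x)) : ∃ A ∈ weakPowerClosure T, A x = y := by
  obtain ⟨C, hC⟩ := hT.exists_norm_pow_le
  rw [weakClosure, ← range_iterate_map_toWeakSpace] at hy
  obtain ⟨f, hf, hfx⟩ :=
    exists_mem_envelopingSemigroup_apply_eq hT.isCompact_closure_range_iterate hy
  obtain ⟨A, hA, rfl⟩ := exists_mem_weakPowerClosure_coe_map_eq hC hf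
  exact ⟨A, hA, hfx⟩

lemma exists_mul_eq_one_of_mem_weakPowerClosure (hT : IsWeaklyAlmostPeriodic T)
    (hflight : ∀ x, IsFlightVector T x → x = 0) (hA : A ∈ weakPowerClosure T) :
    ∃ B ∈ weakPowerClosure T, B * A = 1 := by
  obtain ⟨C, hC⟩ := hT.exists_norm_pow_le
  have hidem : ∀ p ∈ envelopingSemigroup (WeakSpace.map T), p ∘ p = p → p = id := by
    intro p hp hpp
    obtain ⟨P, hP, rfl⟩ := exists_mem_weakPowerClosure_coe_map_eq hC hp
    rw [eq_one_of_mul_self_of_mem_weakPowerClosure hflight hP (DFunLike.coe_injective hpp)]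
    rfl
  obtain ⟨g, hg, hgA⟩ := exists_leftInverse_mem_envelopingSemigroup (WeakSpace.map T).continuous
    hT.isCompact_closure_range_iterate hidem hA
  obtain ⟨B, hB, rfl⟩ := exists_mem_weakPowerClosure_coe_map_eq hC hg
  exact ⟨B, hB, DFunLike.coe_injective hgA⟩

lemma weakClosure_forwardOrbit_subset_of_mem (hT : IsWeaklyAlmostPeriodic T)
    (hflight : ∀ x, IsFlightVector T x → x = 0) {x y : X}
    (hy : y ∈ weakClosure 𝕜 (forwardOrbit T x)) :
    weakClosure 𝕜 (forwardOrbit T x) ⊆ weakClosure 𝕜 (forwardOrbit T y) := by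
  intro z hz
  obtain ⟨A, hA, rfl⟩ := exists_mem_weakPowerClosure_apply_eq hT hy
  obtain ⟨D, hD, rfl⟩ := exists_mem_weakPowerClosure_apply_eq hT hz
  obtain ⟨B, hB, hBA⟩ := exists_mul_eq_one_of_mem_weakPowerClosure hT hflight hA
  have hBAx : B (A x) = x := DFunLike.congr_fun hBA x
  have hmem := apply_mem_weakClosure_forwardOrbit (mul_mem_weakPowerClosure hD hB) (A x)
  rwa [mul_apply_eq_comp, hBAx] at hmem

lemma mapsTo_weakClosure_forwardOrbit (hT : IsWeaklyAlmostPeriodic T) (x : X) :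
    MapsTo T (weakClosure 𝕜 (forwardOrbit T x)) (weakClosure 𝕜 (forwardOrbit T x)) := by
  intro y hy
  obtain ⟨A, hA, rfl⟩ := exists_mem_weakPowerClosure_apply_eq hT hy
  have hTA := mul_mem_weakPowerClosure (pow_mem_weakPowerClosure T 1) hA
  simpa only [pow_one, mul_apply_eq_comp] using apply_mem_weakClosure_forwardOrbit hTA x

theorem exists_inverse_isAlmostPeriodic_of_isFlightVector_eq_zero (hT : IsWeaklyAlmostPeriodic T)
    (hflight : ∀ x, IsFlightVector T x → x = 0) :
    ∃ L : X →L[𝕜] X, T * L = 1 ∧ L * T = 1 ∧ (∃ C, ∀ n : ℕ, ‖L ^ n‖ ≤ C) ∧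
      IsAlmostPeriodic L := by
  obtain ⟨C, hC⟩ := hT.exists_norm_pow_le
  obtain ⟨L, hL, hLT⟩ := exists_mul_eq_one_of_mem_weakPowerClosure hT hflight
    (pow_one T ▸ pow_mem_weakPowerClosure T 1)
  have hTL : T * L = 1 := (commute_of_mem_weakPowerClosure hL).eq.symm.trans hLT
  have hLC (n : ℕ) : ‖L ^ n‖ ≤ C :=
    norm_le_of_mem_weakPowerClosure hC (pow_mem_weakPowerClosure_of_mem hL n)
  refine ⟨L, hTL, hLT, ⟨C, hLC⟩, fun x => ?_⟩
  have hsubset : forwardOrbit L x ⊆ weakClosure 𝕜 (forwardOrbit T x) := by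
    rintro _ ⟨n, rfl⟩
    exact apply_mem_weakClosure_forwardOrbit (pow_mem_weakPowerClosure_of_mem hL n) x
  have hcompact : IsCompact (toWeakSpace 𝕜 X '' weakClosure 𝕜 (forwardOrbit T x)) := by
    rw [toWeakSpace_image_weakClosure]
    exact hT x
  have hbounded : TotallyBounded (weakClosure 𝕜 (forwardOrbit T x)) :=
    totallyBounded_of_minimal hLT hLC hcompact
      (isSeparable_weakClosure (𝕜 := 𝕜) (countable_range _).isSeparable)
      (mapsTo_weakClosure_forwardOrbit hT x)
      (fun _ => weakClosure_forwardOrbit_subset_of_mem hT hflight)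
  exact (hbounded.subset hsubset).closure.isCompact_of_isClosed isClosed_closure

end Reversible

section Separated

variable {𝕜 : Type*} [RCLike 𝕜] {X : Type*} [NormedAddCommGroup X] [NormedSpace 𝕜 X]
  {S T : X →L[𝕜] X} {x : X} {α : 𝕜}

-- On the line `𝕜 ∙ x` the weak and the norm topology coincide.
lemma IsFlightVector.zero_mem_closure_of_apply_eq_smul (hx : IsFlightVector T x)
    (hTx : T x = α • x) : 0 ∈ closure (forwardOrbit T x) := by
  obtain rfl | hne := eq_or_ne x 0
  · exact subset_closure ⟨0, rfl⟩
  have hpow (n : ℕ) : (T ^ n) x = α ^ n • x := by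
    induction n with
    | zero => simp only [pow_zero, one_smul, one_apply_eq_self]
    | succ n ih => rw [pow_succ, mul_apply_eq_comp, hTx, map_smul, ih, smul_smul, pow_succ']
  have hline : IsClosedEmbedding fun c : 𝕜 => c • toWeakSpace 𝕜 X x :=
    isClosedEmbedding_smul_left ((toWeakSpace 𝕜 X).map_ne_zero_iff.2 hne)
  have horbit : forwardOrbit T x = (· • x) '' range (fun n : ℕ => α ^ n) := by
    rw [forwardOrbit, ← range_comp]
    exact congrArg range (funext hpow)
  rw [IsFlightVector, weakClosure, horbit, image_image] at hx
  have hx : toWeakSpace 𝕜 X 0 ∈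
      closure ((fun c : 𝕜 => c • toWeakSpace 𝕜 X x) '' range fun n : ℕ => α ^ n) := hx
  rw [hline.closure_image_eq] at hx
  obtain ⟨c, hc, hcx⟩ := hx
  have hcx : c • x = 0 := (toWeakSpace 𝕜 X).injective hcx
  rw [horbit, ← hcx]
  exact image_closure_subset_closure_image (continuous_id.smul continuous_const)
    (mem_image_of_mem _ hc)

lemma commute_of_eq_smul_one_add (hT : T = α • 1 + S) : Commute S T :=
  hT ▸ ((Commute.one_right S).smul_right α).add_right (.refl S)

lemma eq_zero_of_isFlightVector_of_pow_apply_eq_zero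
    (hsep : ∀ x, 0 ∈ closure (forwardOrbit T x) → x = 0) (hT : T = α • 1 + S) (k : ℕ)
    (hx : IsFlightVector T x) (hSx : (S ^ k) x = 0) : x = 0 := by
  induction k with
  | zero => exact hSx
  | succ k ih =>
    have hflight : IsFlightVector T ((S ^ k) x) :=
      hx.map ((commute_of_eq_smul_one_add hT).pow_left k)
    have heigen : T ((S ^ k) x) = α • (S ^ k) x := by
      have hS : S ((S ^ k) x) = 0 := by rwa [← mul_apply_eq_comp, ← pow_succ']
      rw [hT, add_apply, hS, add_zero]
      rfl
    exact ih (hsep _ (hflight.zero_mem_closure_of_apply_eq_smul heigen))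

lemma IsFlightVector.eq_zero_of_isCompactOperator_pow {C : ℝ} (hx : IsFlightVector T x)
    (hC : ∀ n : ℕ, ‖T ^ n‖ ≤ C) (hsep : ∀ x, 0 ∈ closure (forwardOrbit T x) → x = 0)
    (hT : T = α • 1 + S) {k : ℕ} (hS : IsCompactOperator (S ^ k : X →L[𝕜] X)) : x = 0 := by
  have hST : Commute (S ^ k) T := (commute_of_eq_smul_one_add hT).pow_left k
  have hmem : 0 ∈ closure (forwardOrbit T ((S ^ k) x)) :=
    weakClosure_subset_closure_of_isCompact (isCompact_closure_forwardOrbit_apply hC hS hST x)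
      (hx.map hST)
  exact eq_zero_of_isFlightVector_of_pow_apply_eq_zero hsep hT k hx (hsep _ hmem)

end Separated

/-- Let `X` be a Banach space over `𝕜` (`ℝ` or `ℂ`) and let `T = α·I + S`
be weakly almost periodic with `S^k` compact for some `k ≥ 1`. If `inf_n ‖Tⁿ x‖ > 0` for
every `x ≠ 0`, then `T` is invertible with bounded inverse, and `T⁻¹` is power-bounded and
almost periodic. -/
theorem invertible_of_weaklyAlmostPeriodic_scalar_plus_compact_power
    {𝕜 : Type*} [RCLike 𝕜] {X : Type*} [NormedAddCommGroup X] [NormedSpace 𝕜 X]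
    [CompleteSpace X]
    (α : 𝕜) (S : X →L[𝕜] X) (k : ℕ) (hk : 1 ≤ k)
    (hS : IsCompactOperator (S ^ k : X →L[𝕜] X))
    (T : X →L[𝕜] X) (hT : T = α • (1 : X →L[𝕜] X) + S)
    (hwap : ∀ x : X, IsCompact (closure
      (toWeakSpace 𝕜 X '' Set.range (fun n : ℕ => (T ^ n) x))))
    (hinf : ∀ x : X, x ≠ 0 → 0 < ⨅ n : ℕ, ‖(T ^ n) x‖) :
    ∃ Tinv : X →L[𝕜] X,
      T.comp Tinv = ContinuousLinearMap.id 𝕜 X ∧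
      Tinv.comp T = ContinuousLinearMap.id 𝕜 X ∧
      (∃ C : ℝ, ∀ n : ℕ, ‖Tinv ^ n‖ ≤ C) ∧
      (∀ x : X, IsCompact (closure (Set.range (fun n : ℕ => (Tinv ^ n) x)))) := by
  have hsep (x : X) : 0 ∈ closure (forwardOrbit T x) → x = 0 :=
    eq_zero_of_zero_mem_closure_forwardOrbit (hinf x)
  have hT' : IsWeaklyAlmostPeriodic T := hwap
  obtain ⟨C, hC⟩ := hT'.exists_norm_pow_le
  exact exists_inverse_isAlmostPeriodic_of_isFlightVector_eq_zero hT' fun x hx =>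
    hx.eq_zero_of_isCompactOperator_pow hC hsep hT hS
end
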